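/- For every integer n, the identity −X_{2n+1}(−x,−t) − y = −(x²−y−2)·(S_n(t) + (1−y)·S_{n−1}(t))·((1−y)·S_n(t) + S_{n−1}(t)) holds in ℂ[x,y], where t = y² − y·x² + 2x² − 2. -/

import Mathlib

open Polynomial

/-- The Chebyshev-like polynomials `S n ∈ R[X]` defined by `S 0 = 1`, `S 1 = X` and
`S (n+1) = X * S n - S (n-1)` for all `n : ℤ`. -/
noncomputable def S (R : Type*) [CommRing R] : ℤ → R[X]
  | 0 => 1
  | 1 => X
  | (n : ℕ) + 2 => X * S R (n + 1) - S R n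
  | -((n : ℕ) + 1) => X * S R (-n) - S R (-n + 1)
  termination_by n => Int.natAbs n + Int.natAbs (n - 1)

/-- The variable `x` of `ℂ[x,y]`, realized as `MvPolynomial (Fin 2) ℂ`. -/
noncomputable def xP : MvPolynomial (Fin 2) ℂ := MvPolynomial.X 0

/-- The variable `y` of `ℂ[x,y]`. -/
noncomputable def yP : MvPolynomial (Fin 2) ℂ := MvPolynomial.X 1

/-- The polynomials `X_m ∈ ℂ[x,y]` defined by `X_0 = -2`, `X_1 = -x^2 - y` and
`X_{m+1} = y * X_m - X_{m-1} - 2x^2` for all `m : ℤ`. -/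
noncomputable def Xp : ℤ → MvPolynomial (Fin 2) ℂ
  | 0 => -2
  | 1 => -(MvPolynomial.X 0) ^ 2 - MvPolynomial.X 1
  | (m : ℕ) + 2 => MvPolynomial.X 1 * Xp (m + 1) - Xp m - 2 * (MvPolynomial.X 0) ^ 2
  | -((m : ℕ) + 1) => MvPolynomial.X 1 * Xp (-m) - Xp (-m + 1) - 2 * (MvPolynomial.X 0) ^ 2
  termination_by m => Int.natAbs m + Int.natAbs (m - 1)

/-- The polynomial `t(x,y) = y^2 - y x^2 + 2 x^2 - 2 ∈ ℂ[x,y]`. -/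
noncomputable def tP : MvPolynomial (Fin 2) ℂ := yP ^ 2 - yP * xP ^ 2 + 2 * xP ^ 2 - 2

/-- The substitution homomorphism of `ℂ[x,y]` sending `x ↦ -x` and `y ↦ -t(x,y)`. -/
noncomputable def φ : MvPolynomial (Fin 2) ℂ →ₐ[ℂ] MvPolynomial (Fin 2) ℂ :=
  MvPolynomial.aeval ![-xP, -tP]

theorem S_add_two (R : Type*) [CommRing R] : ∀ n : ℤ, S R (n + 2) = X * S R (n + 1) - S R n
  | (k : ℕ) => S.eq_3 R k
  | -(k + 1 : ℕ) => by
    linear_combination (norm := (simp [Int.negSucc_eq]; ring_nf)) S.eq_4 R k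

theorem S_add_one (R : Type*) [CommRing R] (n : ℤ) :
    S R (n + 1) = X * S R n - S R (n - 1) := by
  linear_combination (norm := ring_nf) S_add_two R (n - 1)

theorem Xp_add_two : ∀ m : ℤ, Xp (m + 2) = yP * Xp (m + 1) - Xp m - 2 * xP ^ 2
  | (k : ℕ) => Xp.eq_3 k
  | -(k + 1 : ℕ) => by
    linear_combination (norm := (simp [Int.negSucc_eq, xP, yP]; ring_nf)) Xp.eq_4 k

/-- The image of the recurrence of `Xp` under the substitution `φ`. -/
theorem φ_Xp_add_two (m : ℤ) :
    φ (Xp (m + 2)) = -tP * φ (Xp (m + 1)) - φ (Xp m) - 2 * xP ^ 2 := by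
  rw [Xp_add_two]
  simp only [map_sub, map_mul, map_pow, map_ofNat φ 2]
  simp [φ, xP, yP]

theorem S_zero (R : Type*) [CommRing R] : S R 0 = 1 := by rw [S]

theorem S_one (R : Type*) [CommRing R] : S R 1 = X := by rw [S]

theorem S_neg_one (R : Type*) [CommRing R] : S R (-1) = 0 := by
  have h := S_add_two R (-1)
  norm_num [S_zero, S_one] at h
  linear_combination h

/-- The quadratic relation between consecutive `S n`. -/
theorem S_sq_add_S_sq (R : Type*) [CommRing R] (n : ℤ) :
    S R n ^ 2 + S R (n - 1) ^ 2 - X * S R n * S R (n - 1) = 1 := by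
  induction n using Int.induction_on with
  | zero => simp [S_zero, S_neg_one]
  | succ k ih =>
    rw [add_sub_cancel_right, S_add_one]
    linear_combination ih
  | pred k ih =>
    have h := S_add_one R (-(k : ℤ) - 1)
    rw [sub_add_cancel] at h
    rw [h] at ih
    linear_combination ih

theorem aeval_S_add_one (R : Type*) {A : Type*} [CommRing R] [CommRing A] [Algebra R A]
    (t : A) (n : ℤ) :
    aeval t (S R (n + 1)) = t * aeval t (S R n) - aeval t (S R (n - 1)) := by
  simp [S_add_one]

theorem aeval_S_sq_add_S_sq (R : Type*) {A : Type*} [CommRing R] [CommRing A] [Algebra R A]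
    (t : A) (n : ℤ) :
    aeval t (S R n) ^ 2 + aeval t (S R (n - 1)) ^ 2
      - t * aeval t (S R n) * aeval t (S R (n - 1)) = 1 := by
  simpa using congrArg (aeval t) (S_sq_add_S_sq R n)

/-- In terms of `a = S n (t)` and `b = S (n-1) (t)`, the substitution `φ` sends `X_{2n}` to
`-2 - (t-2) (t+2-x^2) b^2` and `X_{2n+1}` to `t - x^2 + (t-2) (t+2-x^2) a b`. -/
theorem φ_Xp_even_and_odd (n : ℤ) :
    φ (Xp (2 * n)) = -2 - (tP - 2) * (tP + 2 - xP ^ 2) * aeval tP (S ℂ (n - 1)) ^ 2 ∧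
    φ (Xp (2 * n + 1)) = tP - xP ^ 2 +
      (tP - 2) * (tP + 2 - xP ^ 2) * (aeval tP (S ℂ n) * aeval tP (S ℂ (n - 1))) := by
  induction n using Int.induction_on with
  | zero =>
    constructor
    · simp [Xp, map_ofNat φ 2, S_neg_one]
    · simp [Xp, S_neg_one, φ]
      ring
  | succ k ih =>
    obtain ⟨h₀, h₁⟩ := ih
    have q := aeval_S_sq_add_S_sq ℂ tP k
    have s := aeval_S_add_one ℂ tP k
    have r₀ := φ_Xp_add_two (2 * k)
    have r₁ := φ_Xp_add_two (2 * k + 1)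
    rw [show (2 * k + 1 + 1 : ℤ) = 2 * k + 2 by ring] at r₁
    rw [add_sub_cancel_right, s, show (2 * (k + 1) + 1 : ℤ) = 2 * k + 1 + 2 by ring,
      show (2 * (k + 1) : ℤ) = 2 * k + 2 by ring, r₁, r₀, h₀, h₁]
    constructor
    · linear_combination (tP - 2) * (tP + 2 - xP ^ 2) * q
    · linear_combination -tP * ((tP - 2) * (tP + 2 - xP ^ 2) * q)
  | pred k ih =>
    obtain ⟨h₀, h₁⟩ := ih
    have q := aeval_S_sq_add_S_sq ℂ tP (-k - 1)
    have s := aeval_S_add_one ℂ tP (-k - 1)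
    rw [sub_add_cancel] at s
    have r₀ := φ_Xp_add_two (2 * (-k - 1))
    have r₁ := φ_Xp_add_two (2 * (-k - 1) + 1)
    rw [show (2 * (-k - 1) + 2 : ℤ) = 2 * -k by ring, h₀] at r₀
    rw [show (2 * (-k - 1) + 1 + 2 : ℤ) = 2 * -k + 1 by ring,
      show (2 * (-k - 1) + 1 + 1 : ℤ) = 2 * -k by ring, h₀, h₁, s] at r₁
    constructor
    · linear_combination r₀ - tP * r₁ + (tP - 2) * (tP + 2 - xP ^ 2) * q
    · linear_combination r₁

/-- `-X_{2n+1}(-x,-t) - y = -(x^2-y-2) (S_n(t) + (1-y) S_{n-1}(t)) ((1-y) S_n(t) + S_{n-1}(t))`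
for every integer `n`, where `t = y^2 - y x^2 + 2x^2 - 2`. -/
theorem Xp_odd_substitution (n : ℤ) :
    -φ (Xp (2 * n + 1)) - yP =
      -(xP ^ 2 - yP - 2) * (aeval tP (S ℂ n) + (1 - yP) * aeval tP (S ℂ (n - 1)))
        * ((1 - yP) * aeval tP (S ℂ n) + aeval tP (S ℂ (n - 1))) := by
  rw [(φ_Xp_even_and_odd n).2]
  have q := aeval_S_sq_add_S_sq ℂ tP n
  generalize aeval tP (S ℂ n) = a at *
  generalize aeval tP (S ℂ (n - 1)) = b at *
  rw [tP] at *
  linear_combination (xP ^ 2 - yP - 2) * (1 - yP) * q
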